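/- Let S₁, S₂, S₃, S₄ be continuous semilattices with zero, L a completely distributive lattice with a unital quantale structure *, and let R ⊆ S₁ × S₂ × L, Q ⊆ S₂ × S₃ × L, T ⊆ S₃ × S₄ × L be pseudo-invertible L-ambiguous representations (each satisfying: whenever (x,y,α) belongs to the relation, y' ≪ y, and α' ≪ α, there exists x' ≪ x with (x',y',α') in the relation). Then the composition ⊛ is associative: (R ⊛ Q) ⊛ T = R ⊛ (Q ⊛ T); moreover, (x,t,α) belongs to either side iff for all α' ≪ α and t' ≪ t there exist n ∈ ℕ, y₁,…,yₙ ∈ S₂, z₁,…,zₙ ∈ S₃ and β₁,γ₁,δ₁,…,βₙ,γₙ,δₙ ∈ L with (x,yᵢ,βᵢ) ∈ R, (yᵢ,zᵢ,γᵢ) ∈ Q, (zᵢ,t',δᵢ) ∈ T for each i, and β₁*γ₁*δ₁ ∨ … ∨ βₙ*γₙ*δₙ ≥ α'. -/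

import Mathlib

/-- A dcpo: every nonempty directed subset has a least upper bound. -/
def IsDcpo (α : Type*) [PartialOrder α] : Prop :=
  ∀ D : Set α, D.Nonempty → DirectedOn (· ≤ ·) D → ∃ a : α, IsLUB D a

/-- Scott closed: a lower set closed under suprema of its (nonempty) directed subsets. -/
def ScottClosed {α : Type*} [PartialOrder α] (A : Set α) : Prop :=
  IsLowerSet A ∧
    ∀ D : Set α, D ⊆ A → D.Nonempty → DirectedOn (· ≤ ·) D → ∀ a : α, IsLUB D a → a ∈ A

/-- Scott closure: the least Scott closed set containing `A`. -/
def scottClosure {α : Type*} [PartialOrder α] (A : Set α) : Set α :=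
  ⋂₀ {C : Set α | ScottClosed C ∧ A ⊆ C}

/-- `x` is way below `y`. -/
def WayBelow {α : Type*} [PartialOrder α] (x y : α) : Prop :=
  ∀ D : Set α, D.Nonempty → DirectedOn (· ≤ ·) D → ∀ a : α, IsLUB D a → y ≤ a → ∃ d ∈ D, x ≤ d

/-- A continuous (meet-)semilattice with zero: a dcpo meet-semilattice with bottom in which
every element is the directed supremum of the elements way below it. -/
def IsContinuousSemilattice (α : Type*) [SemilatticeInf α] [OrderBot α] : Prop :=
  IsDcpo α ∧
    ∀ y : α, DirectedOn (· ≤ ·) {x : α | WayBelow x y} ∧ IsLUB {x : α | WayBelow x y} y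

/-- A compatibility `P : S × S' → {0,1}` (encoded with `Prop` as the two-element lattice,
`P x y` meaning `P(x,y) = 1`): it preserves binary meets in each variable separately,
sends pairs containing a bottom element to `0`, and is Scott continuous (preserves
suprema of nonempty directed subsets of the product). -/
def IsCompatibility {S S' : Type*} [SemilatticeInf S] [OrderBot S]
    [SemilatticeInf S'] [OrderBot S'] (P : S → S' → Prop) : Prop :=
  (∀ x₁ x₂ y, P (x₁ ⊓ x₂) y ↔ P x₁ y ∧ P x₂ y) ∧
  (∀ x y₁ y₂, P x (y₁ ⊓ y₂) ↔ P x y₁ ∧ P x y₂) ∧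
  (∀ y, ¬ P ⊥ y) ∧ (∀ x, ¬ P x ⊥) ∧
  (∀ D : Set (S × S'), D.Nonempty → DirectedOn (· ≤ ·) D → ∀ a : S × S', IsLUB D a →
    (P a.1 a.2 ↔ ∃ p ∈ D, P p.1 p.2))

/-- A separating compatibility. -/
def IsSeparatingCompatibility {S S' : Type*} [SemilatticeInf S] [OrderBot S]
    [SemilatticeInf S'] [OrderBot S'] (P : S → S' → Prop) : Prop :=
  IsCompatibility P ∧
  (∀ x₁ x₂ : S, (∀ y, P x₁ y ↔ P x₂ y) → x₁ = x₂) ∧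
  (∀ y₁ y₂ : S', (∀ x, P x y₁ ↔ P x y₂) → y₁ = y₂)

/-- Transversal of `A ⊆ S` w.r.t. a compatibility `P : S × S' → {0,1}`:
all `y ∈ S'` with `P(x,y) = 0` for every `x ∈ A`. -/
def transversal {S S' : Type*} (P : S → S' → Prop) (A : Set S) : Set S' :=
  {y : S' | ∀ x ∈ A, ¬ P x y}

/-- A (crisp) ambiguous representation of `S₁` in `S₂`. -/
def AmbRep {S₁ S₂ : Type*} [PartialOrder S₁] [PartialOrder S₂] (R : Set (S₁ × S₂)) : Prop :=
  (∀ x : S₁, ({y : S₂ | (x, y) ∈ R}).Nonempty ∧ ScottClosed {y : S₂ | (x, y) ∈ R}) ∧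
  (∀ y : S₂, IsUpperSet {x : S₁ | (x, y) ∈ R})

/-- The pseudo-inverse of a relation `R ⊆ S₁ × S₂` w.r.t. compatibilities
`P₁ : S₁ × T₁ → {0,1}` and `P₂ : S₂ × T₂ → {0,1}`. -/
def psInv {S₁ S₂ T₁ T₂ : Type*} (P₁ : S₁ → T₁ → Prop) (P₂ : S₂ → T₂ → Prop)
    (R : Set (S₁ × S₂)) : Set (T₂ × T₁) :=
  {p : T₂ × T₁ | ∀ x : S₁, P₁ x p.2 → ∃ y : S₂, (x, y) ∈ R ∧ P₂ y p.1}

/-- Composition `R ; Q` of ambiguous representations. -/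
def ambComp {S₁ S₂ S₃ : Type*} [PartialOrder S₃]
    (R : Set (S₁ × S₂)) (Q : Set (S₂ × S₃)) : Set (S₁ × S₃) :=
  {p : S₁ × S₃ | ∀ z' : S₃, WayBelow z' p.2 → ∃ y : S₂, (p.1, y) ∈ R ∧ (y, z') ∈ Q}

/-- Pseudo-invertibility condition (c). -/
def PseudoInvertible {S₁ S₂ : Type*} [PartialOrder S₁] [PartialOrder S₂]
    (R : Set (S₁ × S₂)) : Prop :=
  ∀ x y, (x, y) ∈ R → ∀ y', WayBelow y' y → ∃ x', WayBelow x' x ∧ (x', y') ∈ R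

/-- An `L`-fuzzy ambiguous representation of `S₁` in `S₂`. -/
def LAmbRep {S₁ S₂ L : Type*} [PartialOrder S₁] [PartialOrder S₂] [PartialOrder L]
    (R : Set (S₁ × S₂ × L)) : Prop :=
  (∀ (y : S₂) (α : L), IsUpperSet {x : S₁ | (x, y, α) ∈ R}) ∧
  (∀ (x : S₁) (α : L),
    ({y : S₂ | (x, y, α) ∈ R}).Nonempty ∧ ScottClosed {y : S₂ | (x, y, α) ∈ R}) ∧
  (∀ (x : S₁) (y : S₂), ({α : L | (x, y, α) ∈ R}).Nonempty ∧
    DirectedOn (· ≤ ·) {α : L | (x, y, α) ∈ R} ∧ ScottClosed {α : L | (x, y, α) ∈ R})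

/-- The `α`-cut of an `L`-fuzzy relation. -/
def lCut {S₁ S₂ L : Type*} (R : Set (S₁ × S₂ × L)) (α : L) : Set (S₁ × S₂) :=
  {p : S₁ × S₂ | (p.1, p.2, α) ∈ R}

/-- The pseudo-inverse of an `L`-fuzzy ambiguous representation, given through its
`α`-cuts: `(R⊤)_α = ⋂_{β ≪ α} (R_β)⊤`. -/
def lpsInv {S₁ S₂ T₁ T₂ L : Type*} [PartialOrder L]
    (P₁ : S₁ → T₁ → Prop) (P₂ : S₂ → T₂ → Prop) (R : Set (S₁ × S₂ × L)) :
    Set (T₂ × T₁ × L) :=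
  {p : T₂ × T₁ × L | ∀ β : L, WayBelow β p.2.2 → (p.1, p.2.1) ∈ psInv P₁ P₂ (lCut R β)}

/-- Pseudo-invertibility condition (d) for `L`-fuzzy ambiguous representations. -/
def LPseudoInvertible {S₁ S₂ L : Type*} [PartialOrder S₁] [PartialOrder S₂] [PartialOrder L]
    (R : Set (S₁ × S₂ × L)) : Prop :=
  ∀ x y α, (x, y, α) ∈ R → ∀ y', WayBelow y' y → ∀ α', WayBelow α' α →
    ∃ x', WayBelow x' x ∧ (x', y', α') ∈ R

/-- A unital quantale structure on a complete lattice: an associative multiplication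
distributing over arbitrary suprema in each variable, with the top element as two-sided
unit. -/
def IsQuantaleMul {L : Type*} [CompleteLattice L] (mul : L → L → L) : Prop :=
  (∀ a b c, mul (mul a b) c = mul a (mul b c)) ∧
  (∀ (s : Set L) (b : L), mul (sSup s) b = ⨆ a ∈ s, mul a b) ∧
  (∀ (a : L) (s : Set L), mul a (sSup s) = ⨆ b ∈ s, mul a b) ∧
  (∀ a, mul ⊤ a = a) ∧ (∀ a, mul a ⊤ = a)

/-- Composition `R ⊛ Q` of `L`-fuzzy ambiguous representations w.r.t. a quantale
multiplication `mul` on `L`. -/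
def lComp {S₁ S₂ S₃ L : Type*} [PartialOrder S₃] [CompleteLattice L] (mul : L → L → L)
    (R : Set (S₁ × S₂ × L)) (Q : Set (S₂ × S₃ × L)) : Set (S₁ × S₃ × L) :=
  {p : S₁ × S₃ × L | ∀ z' : S₃, WayBelow z' p.2.1 → ∀ α' : L, WayBelow α' p.2.2 →
    ∃ (n : ℕ) (y : Fin n → S₂) (β γ : Fin n → L),
      (∀ i, (p.1, y i, β i) ∈ R ∧ (y i, z', γ i) ∈ Q) ∧ α' ≤ ⨆ i, mul (β i) (γ i)}

theorem WayBelow.le {α : Type*} [PartialOrder α] {x y : α} (h : WayBelow x y) : x ≤ y := by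
  obtain ⟨d, rfl, hd⟩ := h {y} (Set.singleton_nonempty y) (directedOn_singleton y) y
    isLUB_singleton le_rfl
  exact hd

theorem WayBelow.trans_le {α : Type*} [PartialOrder α] {x y z : α} (h : WayBelow x y)
    (hyz : y ≤ z) : WayBelow x z :=
  fun D hD hdir a ha hza => h D hD hdir a ha (hyz.trans hza)

theorem WayBelow.bot_left {α : Type*} [PartialOrder α] [OrderBot α] (y : α) :
    WayBelow ⊥ y :=
  fun _ hD _ _ _ _ => hD.imp fun _ hd => ⟨hd, bot_le⟩

/-- The way-below relation of a continuous semilattice interpolates. -/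
theorem IsContinuousSemilattice.exists_wayBelow_wayBelow {S : Type*} [SemilatticeInf S]
    [OrderBot S] (h : IsContinuousSemilattice S) {x z : S} (hxz : WayBelow x z) :
    ∃ y, WayBelow x y ∧ WayBelow y z := by
  obtain ⟨d, ⟨y, hdy, hyz⟩, hxd⟩ := hxz {d | ∃ y, WayBelow d y ∧ WayBelow y z}
    ⟨⊥, ⊥, .bot_left _, .bot_left _⟩
    (by
      rintro d₁ ⟨y₁, hd₁, hy₁⟩ d₂ ⟨y₂, hd₂, hy₂⟩
      obtain ⟨y, hy, h₁, h₂⟩ := (h.2 z).1 y₁ hy₁ y₂ hy₂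
      obtain ⟨d, hd, h₃, h₄⟩ := (h.2 y).1 d₁ (hd₁.trans_le h₁) d₂ (hd₂.trans_le h₂)
      exact ⟨d, ⟨y, hd, hy⟩, h₃, h₄⟩)
    z
    ⟨fun d ⟨y, hdy, hyz⟩ => hdy.le.trans hyz.le, fun b hb =>
      (h.2 z).2.2 fun y hyz => (h.2 y).2.2 fun d hdy => hb ⟨y, hdy, hyz⟩⟩
    le_rfl
  exact ⟨y, fun D hD hdir a ha hya =>
    (hdy D hD hdir a ha hya).imp fun _ he => ⟨he.1, hxd.trans he.2⟩, hyz⟩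

/-- A completely distributive lattice is continuous. -/
theorem sSup_wayBelow {L : Type*} [CompletelyDistribLattice L] (a : L) :
    sSup {b | WayBelow b a} = a := by
  refine le_antisymm (sSup_le fun b hb => WayBelow.le hb) ?_
  let I := {D : Set L // D.Nonempty ∧ DirectedOn (· ≤ ·) D ∧ a ≤ sSup D}
  calc
    a ≤ ⨅ D : I, ⨆ d : D.1, (d : L) := le_iInf fun D => by
      rw [← sSup_eq_iSup']
      exact D.2.2.2
    _ = ⨆ g : (D : I) → D.1, ⨅ D : I, (g D : L) := iInf_iSup_eq
    _ ≤ sSup {b | WayBelow b a} := iSup_le fun g => le_sSup fun D hD hdir c hc hac => by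
      let E : I := ⟨D, hD, hdir, hac.trans_eq hc.sSup_eq.symm⟩
      exact ⟨g E, (g E).2, iInf_le (fun D : I => (g D : L)) E⟩

/-- An element lies below a supremum iff everything way below it lies below a finite join. -/
theorem le_sSup_iff_forall_wayBelow {L : Type*} [CompletelyDistribLattice L] {a : L}
    {s : Set L} :
    a ≤ sSup s ↔ ∀ b, WayBelow b a →
      ∃ (n : ℕ) (c : Fin n → L), (∀ i, c i ∈ s) ∧ b ≤ ⨆ i, c i := by
  constructor
  · intro ha b hb
    obtain ⟨_, ⟨n, c, hc, rfl⟩, hbd⟩ := hb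
      {d | ∃ (n : ℕ) (c : Fin n → L), (∀ i, c i ∈ s) ∧ d = ⨆ i, c i}
      ⟨_, 0, Fin.elim0, fun i => i.elim0, rfl⟩
      (by
        rintro _ ⟨n, c, hc, rfl⟩ _ ⟨m, d, hd, rfl⟩
        refine ⟨_, ⟨n + m, Fin.append c d, fun i => ?_, rfl⟩, ?_, ?_⟩
        · refine Fin.addCases (fun i => ?_) (fun i => ?_) i
          · simpa using hc i
          · simpa using hd i
        · exact iSup_le fun i => le_iSup_of_le (Fin.castAdd m i) (by simp)
        · exact iSup_le fun i => le_iSup_of_le (Fin.natAdd n i) (by simp))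
      _ (isLUB_sSup _)
      (ha.trans (sSup_le fun e he => le_sSup ⟨1, fun _ => e, fun _ => he, by simp⟩))
    exact ⟨n, c, hc, hbd⟩
  · intro h
    rw [← sSup_wayBelow a]
    refine sSup_le fun b hb => ?_
    obtain ⟨n, c, hc, hbc⟩ := h b hb
    exact hbc.trans (iSup_le fun i => le_sSup (hc i))

theorem IsQuantaleMul.mul_le_of_le_sSup_left {L : Type*} [CompleteLattice L] {mul : L → L → L}
    (h : IsQuantaleMul mul) {a b c : L} {s : Set L} (ha : a ≤ sSup s)
    (hs : ∀ d ∈ s, mul d b ≤ c) : mul a b ≤ c := by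
  have hsup : mul (sSup (insert a s)) b = ⨆ d ∈ insert a s, mul d b := h.2.1 _ b
  calc
    mul a b ≤ ⨆ d ∈ insert a s, mul d b := le_iSup₂_of_le a (Set.mem_insert a s) le_rfl
    _ = mul (sSup s) b := by rw [← hsup, sSup_insert, sup_eq_right.2 ha]
    _ ≤ c := by
      rw [h.2.1]
      exact iSup₂_le hs

theorem IsQuantaleMul.mul_le_of_le_sSup_right {L : Type*} [CompleteLattice L] {mul : L → L → L}
    (h : IsQuantaleMul mul) {a b c : L} {s : Set L} (ha : a ≤ sSup s)
    (hs : ∀ d ∈ s, mul b d ≤ c) : mul b a ≤ c := by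
  have hsup : mul b (sSup (insert a s)) = ⨆ d ∈ insert a s, mul b d := h.2.2.1 b _
  calc
    mul b a ≤ ⨆ d ∈ insert a s, mul b d := le_iSup₂_of_le a (Set.mem_insert a s) le_rfl
    _ = mul b (sSup s) := by rw [← hsup, sSup_insert, sup_eq_right.2 ha]
    _ ≤ c := by
      rw [h.2.2.1]
      exact iSup₂_le hs

/-- The products of grades along all paths `x, y, z` through `R` and `Q`. -/
def pathProducts {S₁ S₂ S₃ L : Type*} (mul : L → L → L) (R : Set (S₁ × S₂ × L))
    (Q : Set (S₂ × S₃ × L)) (x : S₁) (z : S₃) : Set L :=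
  {c | ∃ y β γ, (x, y, β) ∈ R ∧ (y, z, γ) ∈ Q ∧ c = mul β γ}

/-- The products of grades along all paths `x, y, z, t` through `R`, `Q` and `T`. -/
def triplePathProducts {S₁ S₂ S₃ S₄ L : Type*} (mul : L → L → L) (R : Set (S₁ × S₂ × L))
    (Q : Set (S₂ × S₃ × L)) (T : Set (S₃ × S₄ × L)) (x : S₁) (t : S₄) : Set L :=
  {c | ∃ y z β γ δ, (x, y, β) ∈ R ∧ (y, z, γ) ∈ Q ∧ (z, t, δ) ∈ T ∧
    c = mul (mul β γ) δ}

theorem mem_lComp_iff {S₁ S₂ S₃ L : Type*} [PartialOrder S₃] [CompletelyDistribLattice L]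
    {mul : L → L → L} {R : Set (S₁ × S₂ × L)} {Q : Set (S₂ × S₃ × L)} {x : S₁} {z : S₃}
    {α : L} :
    (x, z, α) ∈ lComp mul R Q ↔
      ∀ z', WayBelow z' z → α ≤ sSup (pathProducts mul R Q x z') := by
  refine forall₂_congr fun z' _ => ?_
  rw [le_sSup_iff_forall_wayBelow]
  refine forall₂_congr fun α' _ => exists_congr fun n => ?_
  constructor
  · rintro ⟨y, β, γ, h, hα⟩
    exact ⟨_, fun i => ⟨y i, β i, γ i, (h i).1, (h i).2, rfl⟩, hα⟩
  · rintro ⟨c, hc, hα⟩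
    choose y β γ hR hQ hc using hc
    obtain rfl : c = fun i => mul (β i) (γ i) := funext hc
    exact ⟨y, β, γ, fun i => ⟨hR i, hQ i⟩, hα⟩

/-- Membership in `(R ⊛ Q) ⊛ T` in terms of paths of length three. -/
theorem mem_lComp_lComp_left_iff {S₁ S₂ S₃ S₄ L : Type*} [PartialOrder S₂]
    [PartialOrder S₃] [SemilatticeInf S₄] [OrderBot S₄] [CompletelyDistribLattice L]
    (h₄ : IsContinuousSemilattice S₄) {mul : L → L → L} (hmul : IsQuantaleMul mul)
    {R : Set (S₁ × S₂ × L)} {Q : Set (S₂ × S₃ × L)} {T : Set (S₃ × S₄ × L)}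
    (hQ : LAmbRep Q) (hTpi : LPseudoInvertible T) {x : S₁} {t : S₄} {α : L} :
    (x, t, α) ∈ lComp mul (lComp mul R Q) T ↔
      ∀ t', WayBelow t' t → α ≤ sSup (triplePathProducts mul R Q T x t') := by
  rw [mem_lComp_iff]
  constructor
  · intro h t' ht'
    obtain ⟨s, ht's, hst⟩ := h₄.exists_wayBelow_wayBelow ht'
    refine (h s hst).trans (sSup_le ?_)
    rintro _ ⟨z, β, δ, hβ, hδ, rfl⟩
    refine hmul.mul_le_of_le_sSup_right (sSup_wayBelow δ).ge fun δ' hδ' => ?_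
    obtain ⟨z', hz', hzt⟩ := hTpi z s δ hδ t' ht's δ' hδ'
    refine hmul.mul_le_of_le_sSup_left (mem_lComp_iff.1 hβ z' hz') ?_
    rintro _ ⟨y, b, c, hb, hc, rfl⟩
    exact le_sSup ⟨y, z', b, c, δ', hb, hc, hzt, rfl⟩
  · intro h t' ht'
    refine (h t' ht').trans (sSup_le ?_)
    rintro _ ⟨y, z, b, c, d, hb, hc, hd, rfl⟩
    exact le_sSup ⟨z, mul b c, d, mem_lComp_iff.2 fun z' hz' =>
      le_sSup ⟨y, b, c, hb, (hQ.2.1 y c).2.1 hz'.le hc, rfl⟩, hd, rfl⟩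

/-- Membership in `R ⊛ (Q ⊛ T)` in terms of paths of length three. -/
theorem mem_lComp_lComp_right_iff {S₁ S₂ S₃ S₄ L : Type*} [PartialOrder S₃]
    [SemilatticeInf S₄] [OrderBot S₄] [CompletelyDistribLattice L]
    (h₄ : IsContinuousSemilattice S₄) {mul : L → L → L} (hmul : IsQuantaleMul mul)
    {R : Set (S₁ × S₂ × L)} {Q : Set (S₂ × S₃ × L)} {T : Set (S₃ × S₄ × L)}
    (hT : LAmbRep T) {x : S₁} {t : S₄} {α : L} :
    (x, t, α) ∈ lComp mul R (lComp mul Q T) ↔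
      ∀ t', WayBelow t' t → α ≤ sSup (triplePathProducts mul R Q T x t') := by
  rw [mem_lComp_iff]
  constructor
  · intro h t' ht'
    obtain ⟨s, ht's, hst⟩ := h₄.exists_wayBelow_wayBelow ht'
    refine (h s hst).trans (sSup_le ?_)
    rintro _ ⟨y, β, γ, hβ, hγ, rfl⟩
    refine hmul.mul_le_of_le_sSup_right (mem_lComp_iff.1 hγ t' ht's) ?_
    rintro _ ⟨z, c, d, hc, hd, rfl⟩
    exact le_sSup ⟨y, z, β, c, d, hβ, hc, hd, (hmul.1 β c d).symm⟩
  · intro h t' ht'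
    refine (h t' ht').trans (sSup_le ?_)
    rintro _ ⟨y, z, b, c, d, hb, hc, hd, rfl⟩
    exact le_sSup ⟨y, b, mul c d, hb, mem_lComp_iff.2 fun s hs =>
      le_sSup ⟨z, c, d, hc, (hT.2.1 z d).2.1 hs.le hd, rfl⟩, hmul.1 b c d⟩

/-- For pseudo-invertible `L`-ambiguous representations `R`, `Q`, `T`,
the composition `⊛` is associative, and membership of `(x,t,α)` in either side is
characterized by the existence of finite interpolating families. -/
theorem stmt19 {S₁ S₂ S₃ S₄ L : Type*}
    [SemilatticeInf S₁] [OrderBot S₁] [SemilatticeInf S₂] [OrderBot S₂]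
    [SemilatticeInf S₃] [OrderBot S₃] [SemilatticeInf S₄] [OrderBot S₄]
    [CompletelyDistribLattice L]
    (h₁ : IsContinuousSemilattice S₁) (h₂ : IsContinuousSemilattice S₂)
    (h₃ : IsContinuousSemilattice S₃) (h₄ : IsContinuousSemilattice S₄)
    (mul : L → L → L) (hmul : IsQuantaleMul mul)
    (R : Set (S₁ × S₂ × L)) (Q : Set (S₂ × S₃ × L)) (T : Set (S₃ × S₄ × L))
    (hR : LAmbRep R) (hQ : LAmbRep Q) (hT : LAmbRep T)
    (hRpi : LPseudoInvertible R) (hQpi : LPseudoInvertible Q) (hTpi : LPseudoInvertible T) :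
    lComp mul (lComp mul R Q) T = lComp mul R (lComp mul Q T) ∧
    ∀ (x : S₁) (t : S₄) (α : L),
      (x, t, α) ∈ lComp mul (lComp mul R Q) T ↔
        (∀ α' : L, WayBelow α' α → ∀ t' : S₄, WayBelow t' t →
          ∃ (n : ℕ) (y : Fin n → S₂) (z : Fin n → S₃) (β γ δ : Fin n → L),
            (∀ i, (x, y i, β i) ∈ R ∧ (y i, z i, γ i) ∈ Q ∧ (z i, t', δ i) ∈ T) ∧
            α' ≤ ⨆ i, mul (mul (β i) (γ i)) (δ i)) := by
  constructor
  · ext ⟨x, t, α⟩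
    rw [mem_lComp_lComp_left_iff h₄ hmul hQ hTpi, mem_lComp_lComp_right_iff h₄ hmul hT]
  · intro x t α
    rw [mem_lComp_lComp_left_iff h₄ hmul hQ hTpi]
    constructor
    · intro h α' hα' t' ht'
      obtain ⟨n, c, hc, hle⟩ := le_sSup_iff_forall_wayBelow.1 (h t' ht') α' hα'
      choose y z β γ δ hβ hγ hδ hc using hc
      obtain rfl : c = fun i => mul (mul (β i) (γ i)) (δ i) := funext hc
      exact ⟨n, y, z, β, γ, δ, fun i => ⟨hβ i, hγ i, hδ i⟩, hle⟩
    · intro h t' ht'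
      refine le_sSup_iff_forall_wayBelow.2 fun α' hα' => ?_
      obtain ⟨n, y, z, β, γ, δ, hmem, hle⟩ := h α' hα' t' ht'
      exact ⟨n, _, fun i => ⟨y i, z i, β i, γ i, δ i, (hmem i).1, (hmem i).2.1,
        (hmem i).2.2, rfl⟩, hle⟩
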